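/- Let {Y_i : i ∈ ℕ*} be i.i.d. positive integer-valued random variables and {Ỹ_j : j ∈ ℕ*} an independent copy of this sequence; let Y have the common distribution. Let h be the largest positive integer such that the distribution of Y is supported on hℕ*. Define S_0 = S̃_0 = 0, S_n = Y_1 + ⋯ + Y_n, S̃_n = Ỹ_1 + ⋯ + Ỹ_n, and for i, j ∈ hℕ let L_{i,j} = inf{ℓ ≥ 1 : there exist m, n ≥ 0 with i + S_m = ℓ = j + S̃_n}. Let 1 ≤ r < ∞ be a real number and assume E(Y^{r+1}) < ∞. Then there exists a finite constant C such that for all i, j ∈ hℕ: E(L_{i,j}^r) ≤ C(1 + i^r + j^r). -/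

import Mathlib

open MeasureTheory ProbabilityTheory
open scoped ENNReal

noncomputable section

/-- The renewal process `S_m = Y_1 + ⋯ + Y_m` built from the increments `Y`. -/
def renewal {Ω : Type*} (Y : ℕ → Ω → ℕ) (m : ℕ) (ω : Ω) : ℕ := ∑ k ∈ Finset.range m, Y k ω

/-- `L_{i,j}`: the first common point at or above `1` of two delayed renewal processes with
delays `i`, `j` and increments `Y`, `Ỹ` (convention `sInf ∅ = 0`). -/
def firstCommonPoint {Ω : Type*} (Y Yt : ℕ → Ω → ℕ) (i j : ℕ) (ω : Ω) : ℕ :=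
  sInf {ℓ : ℕ | 1 ≤ ℓ ∧ (∃ m : ℕ, i + renewal Y m ω = ℓ) ∧ ∃ n : ℕ, j + renewal Yt n ω = ℓ}

/-- Law of the overshoot over level `d`. -/
def bet (p : ℕ → ℝ≥0∞) : ℕ → ℕ → ℝ≥0∞
  | 0, k => if k = 0 then 1 else 0
  | d + 1, k => bet p d (k + 1) + bet p d 0 * p (k + 1)

lemma ennreal_tsum_succ (f : ℕ → ℝ≥0∞) : ∑' k, f k = f 0 + ∑' k, f (k + 1) :=
  tsum_eq_zero_add' ENNReal.summable

lemma bet_sum (p : ℕ → ℝ≥0∞) (h0 : p 0 = 0) (hp : ∑' y, p y = 1) (d : ℕ) :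
    ∑' k, bet p d k = 1 := by
  have hp' : ∑' y, p (y + 1) = 1 := by
    rw [ennreal_tsum_succ, h0, zero_add] at hp; exact hp
  induction d with
  | zero => simp [bet]
  | succ d ih =>
    simp only [bet]
    rw [ENNReal.tsum_add, ENNReal.tsum_mul_left, hp', mul_one, add_comm, ← ih]
    exact (ennreal_tsum_succ _).symm

lemma bet_le_one (p : ℕ → ℝ≥0∞) (h0 : p 0 = 0) (hp : ∑' y, p y = 1) (d k : ℕ) :
    bet p d k ≤ 1 := by
  rw [← bet_sum p h0 hp d]; exact ENNReal.le_tsum k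

lemma bet_le (p : ℕ → ℝ≥0∞) (h0 : p 0 = 0) (hp : ∑' y, p y = 1) (d k : ℕ) :
    bet p d k ≤ (∑' j, p (k + 1 + j)) + if k = 0 then 1 else 0 := by
  induction d generalizing k with
  | zero => simp [bet]
  | succ d ih =>
    simp only [bet]
    refine le_trans ?_ le_self_add
    rw [ennreal_tsum_succ, add_comm]
    gcongr
    · calc _ ≤ 1 * p (k + 1) := by gcongr; exact bet_le_one p h0 hp d 0
        _ = _ := by simp
    · refine (ih (k + 1)).trans ?_
      simp only [Nat.add_eq_zero_iff, one_ne_zero, and_false, if_false, add_zero]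
      apply le_of_eq
      congr 1; ext j; congr 1; ring

lemma bet_moment (p : ℕ → ℝ≥0∞) (h0 : p 0 = 0) (hp : ∑' y, p y = 1) (r : ℝ) (hr : 1 ≤ r)
    (d : ℕ) : ∑' k, bet p d k * (k : ℝ≥0∞) ^ r ≤ ∑' y, p y * (y : ℝ≥0∞) ^ (r + 1) := by
  have hr0 : 0 < r := by linarith
  calc ∑' k, bet p d k * (k : ℝ≥0∞) ^ r
      ≤ ∑' k, ∑' y, (if k < y then p y else 0) * (k : ℝ≥0∞) ^ r := by
        refine ENNReal.tsum_le_tsum fun k => ?_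
        rw [ENNReal.tsum_mul_right]
        rcases Nat.eq_zero_or_pos k with rfl | hk
        · simp [hr0]
        gcongr
        refine (bet_le p h0 hp d k).trans ?_
        rw [if_neg hk.ne', add_zero]
        have := ENNReal.tsum_comp_le_tsum_of_injective
          (f := fun j => k + 1 + j) (fun x y h => by simpa using h)
          (fun y => if k < y then p y else 0)
        refine le_trans (le_of_eq ?_) this
        congr 1; ext j; rw [if_pos (by omega)]
    _ = ∑' y, ∑' k, (if k < y then p y else 0) * (k : ℝ≥0∞) ^ r := ENNReal.tsum_comm
    _ ≤ _ := by
        refine ENNReal.tsum_le_tsum fun y => ?_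
        rw [tsum_eq_sum (s := Finset.range y) (by
          intro k hk; rw [if_neg (by simpa using hk), zero_mul])]
        calc _ ≤ ∑ k ∈ Finset.range y, p y * (y : ℝ≥0∞) ^ r := by
              refine Finset.sum_le_sum fun k hk => ?_
              have := Finset.mem_range.1 hk
              rw [if_pos this]
              gcongr
          _ = _ := by
              rw [Finset.sum_const, Finset.card_range, nsmul_eq_mul,
                ENNReal.rpow_add_of_nonneg _ _ hr0.le zero_le_one, ENNReal.rpow_one]
              ring

lemma bet_semigroup (p : ℕ → ℝ≥0∞) (e : ℕ) : ∀ d,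
    bet p (d + e) 0 = ∑ k ∈ Finset.range (e + 1), bet p d k * bet p (e - k) 0 := by
  induction e with
  | zero => intro d; simp [bet]
  | succ e ih =>
    intro d
    have h1 := ih 0
    have hren : bet p (e + 1) 0 = ∑ k ∈ Finset.range (e + 1), p (k + 1) * bet p (e - k) 0 := by
      rw [show e + 1 = 1 + e from add_comm _ _, ih 1, show 1 + e = e + 1 from add_comm _ _]
      simp [bet]
    rw [show d + (e + 1) = (d + 1) + e by ring, ih (d + 1), Finset.sum_range_succ' _ (e + 1)]
    simp only [bet, add_mul, Finset.sum_add_distrib, Nat.add_sub_add_right, Nat.sub_zero]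
    congr 1
    change _ = bet p d 0 * bet p (e + 1) 0
    rw [hren, Finset.mul_sum]
    simp only [mul_assoc]

lemma bet_subharm (p : ℕ → ℝ≥0∞) (h0 : p 0 = 0) (g : ℕ → ℝ≥0∞)
    (hg : ∀ a, g a ≤ ∑' y, p y * g (a + y)) (a d : ℕ) :
    g a ≤ ∑' k, bet p d k * g (a + d + k) := by
  induction d with
  | zero =>
    rw [ennreal_tsum_succ]; simp [bet]
  | succ d ih =>
    refine ih.trans ?_
    simp only [bet, add_mul]
    rw [ENNReal.tsum_add, ennreal_tsum_succ, add_comm]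
    gcongr with k
    · apply le_of_eq; rw [show a + d + (k + 1) = a + (d + 1) + k by ring]
    · simp only [mul_assoc]
      rw [ENNReal.tsum_mul_left]
      gcongr
      refine (hg _).trans ?_
      rw [ennreal_tsum_succ, h0, zero_mul, zero_add]
      apply le_of_eq
      congr 1; ext k; congr 2; ring

lemma bet_ge (p : ℕ → ℝ≥0∞) (d k : ℕ) : p (d + 1 + k) ≤ bet p (d + 1) k := by
  induction d generalizing k with
  | zero => simp [bet, add_comm]
  | succ d ih =>
    rw [bet]
    refine le_trans ?_ le_self_add
    refine le_trans (le_of_eq ?_) (ih (k + 1))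
    congr 1; ring

lemma bet_pos (p : ℕ → ℝ≥0∞) (h0 : p 0 = 0)
    (hgcd : ∀ q : ℕ, (∀ y, p y ≠ 0 → q ∣ y) → q = 1) :
    ∃ n0, ∀ n ≥ n0, bet p n 0 ≠ 0 := by
  let s : Set ℕ := {y | p y ≠ 0}
  let M : AddSubmonoid ℕ :=
    { carrier := {n | bet p n 0 ≠ 0}
      zero_mem' := by simp [bet]
      add_mem' := by
        intro a b ha hb
        simp only [Set.mem_ofPred_eq] at *
        rw [bet_semigroup]
        have : bet p a 0 * bet p (b - 0) 0 ≤
            ∑ k ∈ Finset.range (b + 1), bet p a k * bet p (b - k) 0 :=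
          Finset.single_le_sum (f := fun k => bet p a k * bet p (b - k) 0)
            (fun _ _ => zero_le) (by simp)
        intro h
        rw [h] at this
        have := le_antisymm this zero_le
        simp [ha, hb] at this }
  have hsM : AddSubmonoid.closure s ≤ M := by
    rw [AddSubmonoid.closure_le]
    intro y hy
    change bet p y 0 ≠ 0
    cases y with
    | zero => exact absurd h0 hy
    | succ y =>
      have := bet_ge p y 0
      intro h
      rw [h] at this
      exact hy (le_antisymm this zero_le)
  have h1 : Nat.setGcd s = 1 := hgcd _ fun y hy => Nat.setGcd_dvd_of_mem hy
  obtain ⟨n, hn⟩ := Nat.exists_mem_closure_of_ge s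
  exact ⟨n, fun m hm => hsM (hn m hm (by simp [h1]))⟩

lemma bet_tight (p : ℕ → ℝ≥0∞) (h0 : p 0 = 0) (hp : ∑' y, p y = 1) (r : ℝ) (hr : 1 ≤ r)
    (C : ℝ≥0∞) (hC : ∑' y, p y * (y : ℝ≥0∞) ^ (r + 1) ≤ C) (M : ℕ) (hM : 2 * C ≤ M)
    (hMpos : 1 ≤ M) (d : ℕ) : (2 : ℝ≥0∞)⁻¹ ≤ ∑ k ∈ Finset.range M, bet p d k := by
  have hM0 : (M : ℝ≥0∞) ≠ 0 := by simp; omega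
  have hMt : (M : ℝ≥0∞) ≠ ⊤ := by simp
  have h0' : (∑' k, bet p d (k + M)) * M ≤ C := by
    rw [← ENNReal.tsum_mul_right]
    refine le_trans ?_ ((bet_moment p h0 hp r hr d).trans hC)
    refine le_trans ?_ (ENNReal.tsum_comp_le_tsum_of_injective
          (f := fun j => j + M) (fun x y h => by simpa using h) _)
    refine ENNReal.tsum_le_tsum fun k => ?_
    refine mul_le_mul_right ?_ _
    calc (M : ℝ≥0∞) ≤ ((k + M : ℕ) : ℝ≥0∞) := by exact_mod_cast Nat.le_add_left _ _
        _ = ((k + M : ℕ) : ℝ≥0∞) ^ (1 : ℝ) := by rw [ENNReal.rpow_one]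
        _ ≤ _ := by
          apply ENNReal.rpow_le_rpow_of_exponent_le _ hr
          exact_mod_cast (by omega : 1 ≤ k + M)
  have h1 : (1 : ℝ≥0∞) ≤ (∑ k ∈ Finset.range M, bet p d k) + C / M := by
    calc (1 : ℝ≥0∞) = ∑' k, bet p d k := (bet_sum p h0 hp d).symm
      _ = (∑ k ∈ Finset.range M, bet p d k) + ∑' k, bet p d (k + M) :=
        (ENNReal.summable.sum_add_tsum_nat_add' (f := bet p d) (k := M)).symm
      _ ≤ _ := by
        refine add_le_add le_rfl ?_
        rw [ENNReal.le_div_iff_mul_le (Or.inl hM0) (Or.inl hMt)]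
        exact h0'
  have h2 : C / M ≤ 2⁻¹ := by
    rw [ENNReal.div_le_iff hM0 hMt, mul_comm, ← div_eq_mul_inv,
        ENNReal.le_div_iff_mul_le (by simp) (by simp), mul_comm]
    exact hM
  have h3 : (2 : ℝ≥0∞)⁻¹ + 2⁻¹ ≤ (∑ k ∈ Finset.range M, bet p d k) + 2⁻¹ := by
    rw [ENNReal.inv_two_add_inv_two]
    exact h1.trans (add_le_add le_rfl h2)
  exact (ENNReal.add_le_add_iff_right (by simp)).1 h3

lemma bet_lower (p : ℕ → ℝ≥0∞) (h0 : p 0 = 0) (hp : ∑' y, p y = 1) (r : ℝ) (hr : 1 ≤ r)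
    (hC : ∑' y, p y * (y : ℝ≥0∞) ^ (r + 1) ≠ ⊤)
    (hgcd : ∀ q : ℕ, (∀ y, p y ≠ 0 → q ∣ y) → q = 1) :
    ∃ n1 ≥ 1, ∃ δ : ℝ≥0∞, δ ≠ 0 ∧ ∀ n ≥ n1, δ ≤ bet p n 0 := by
  obtain ⟨n0, hn0⟩ := bet_pos p h0 hgcd
  obtain ⟨C, hC'⟩ : ∃ C, C = ∑' y, p y * (y : ℝ≥0∞) ^ (r + 1) := ⟨_, rfl⟩
  rw [← hC'] at hC
  replace hC' := hC'.ge
  obtain ⟨M, hM⟩ := ENNReal.exists_nat_gt (ENNReal.mul_ne_top ENNReal.ofNat_ne_top hC : 2 * C ≠ ⊤)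
  have hMpos : 1 ≤ M := by
    rcases Nat.eq_zero_or_pos M with rfl | h
    · simp at hM
    · exact h
  have tight := bet_tight p h0 hp r hr C hC' M hM.le hMpos
  let m : ℝ≥0∞ := (Finset.range (M + 1)).inf fun j => bet p (n0 + j) 0
  have hm : m ≠ 0 := by
    have : 0 < m := by
      rw [Finset.lt_inf_iff (by simp)]
      intro j _
      exact pos_iff_ne_zero.2 (hn0 _ (by omega))
    exact this.ne'
  refine ⟨n0 + M, by omega, 2⁻¹ * m, by simp [hm], fun n hn => ?_⟩
  obtain ⟨d, rfl⟩ := Nat.exists_eq_add_of_le' hn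
  rw [bet_semigroup]
  calc 2⁻¹ * m ≤ (∑ k ∈ Finset.range M, bet p d k) * m := by gcongr; exact tight d
    _ = ∑ k ∈ Finset.range M, bet p d k * m := by rw [Finset.sum_mul]
    _ ≤ ∑ k ∈ Finset.range M, bet p d k * bet p (n0 + M - k) 0 := by
      refine Finset.sum_le_sum fun k hk => ?_
      have := Finset.mem_range.1 hk
      gcongr
      rw [Nat.add_sub_assoc this.le]
      exact Finset.inf_le (f := fun j => bet p (n0 + j) 0) (Finset.mem_range.2 (by omega))
    _ ≤ _ := Finset.sum_le_sum_of_subset (by intro x; simp only [Finset.mem_range]; omega)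

lemma weighted_minkowski {ι : Type*} [Countable ι] (w f g : ι → ℝ≥0∞) (r : ℝ) (hr : 1 ≤ r) :
    (∑' z, w z * (f z + g z) ^ r) ^ (1 / r) ≤
      (∑' z, w z * f z ^ r) ^ (1 / r) + (∑' z, w z * g z ^ r) ^ (1 / r) := by
  let _ : MeasurableSpace ι := ⊤
  have key : ∀ f : ι → ℝ≥0∞, ∫⁻ z, f z ∂(Measure.count.withDensity w) = ∑' z, w z * f z := by
    intro f
    rw [lintegral_withDensity_eq_lintegral_mul _ (measurable_of_countable _)
      (measurable_of_countable _), lintegral_count]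
    rfl
  have := ENNReal.lintegral_Lp_add_le (μ := Measure.count.withDensity w) (f := f) (g := g)
    (measurable_of_countable _).aemeasurable (measurable_of_countable _).aemeasurable hr
  simpa only [key, Pi.add_apply] using this

lemma minkowski_step (w₁ w₂ : ℕ → ℝ≥0∞) (r : ℝ) (hr : 1 ≤ r) (C δ : ℝ≥0∞)
    (h1 : ∑' k, w₁ k = 1) (h2 : ∑' k, w₂ k = 1)
    (hC1 : ∑' k, w₁ k * (k : ℝ≥0∞) ^ r ≤ C) (hC2 : ∑' k, w₂ k * (k : ℝ≥0∞) ^ r ≤ C)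
    (hδ1 : δ ≤ w₁ 0) (hδ2 : δ ≤ w₂ 0) (t K : ℝ≥0∞) :
    (∑' z : ℕ × ℕ, w₁ z.1 * w₂ z.2 * (if z = 0 then 0 else 1) ≤ 1 - δ * δ) ∧
    ∑' z : ℕ × ℕ, w₁ z.1 * w₂ z.2 * (((t + K * (if z = 0 then 0 else 1)) + z.1) + z.2) ^ r
      ≤ (t + K * (1 - δ * δ) ^ (1 / r) + C ^ (1 / r) + C ^ (1 / r)) ^ r := by
  have hr0 : 0 < r := by linarith
  have prodsum : ∀ f g : ℕ → ℝ≥0∞, ∑' z : ℕ × ℕ, f z.1 * g z.2 = (∑' k, f k) * ∑' k, g k := by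
    intro f g
    rw [ENNReal.tsum_prod (f := fun a b => f a * g b)]
    simp only [ENNReal.tsum_mul_left, ENNReal.tsum_mul_right]
  have htot : ∑' z : ℕ × ℕ, w₁ z.1 * w₂ z.2 = 1 := by rw [prodsum, h1, h2, one_mul]
  have hδ' : δ * δ ≤ w₁ 0 * w₂ 0 := mul_le_mul' hδ1 hδ2
  have hfail : ∑' z : ℕ × ℕ, w₁ z.1 * w₂ z.2 * (if z = 0 then 0 else 1) ≤ 1 - δ * δ := by
    have hδ1' : δ ≤ 1 := hδ1.trans (h1 ▸ ENNReal.le_tsum 0)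
    have hne : δ * δ ≠ ⊤ := by
      have : δ ≠ ⊤ := ne_top_of_le_ne_top ENNReal.one_ne_top hδ1'
      exact ENNReal.mul_ne_top this this
    refine ENNReal.le_sub_of_add_le_left hne ?_
    have hsplit := ENNReal.tsum_eq_add_tsum_ite (f := fun z : ℕ × ℕ => w₁ z.1 * w₂ z.2) 0
    refine le_trans ?_ (hsplit.symm.trans htot).le
    refine add_le_add hδ' (le_of_eq ?_)
    congr 1; ext z
    split_ifs <;> simp
  refine ⟨hfail, ?_⟩
  set w : ℕ × ℕ → ℝ≥0∞ := fun z => w₁ z.1 * w₂ z.2 with hw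
  have e1 : (∑' z : ℕ × ℕ, w z * t ^ r) ^ (1 / r) = t := by
    rw [ENNReal.tsum_mul_right, htot, one_mul, one_div, ENNReal.rpow_rpow_inv hr0.ne']
  have e2 : (∑' z : ℕ × ℕ, w z * (K * (if z = 0 then 0 else 1)) ^ r) ^ (1 / r)
      ≤ K * (1 - δ * δ) ^ (1 / r) := by
    have : ∀ z : ℕ × ℕ, w z * (K * (if z = 0 then 0 else 1)) ^ r
        = K ^ r * (w z * (if z = 0 then 0 else 1)) := by
      intro z
      rw [ENNReal.mul_rpow_of_nonneg _ _ hr0.le]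
      split_ifs <;> simp [hr0, mul_comm]
    simp only [this]
    rw [ENNReal.tsum_mul_left, ENNReal.mul_rpow_of_nonneg _ _ (by positivity), one_div,
      ENNReal.rpow_rpow_inv hr0.ne']
    gcongr
  have e3 : (∑' z : ℕ × ℕ, w z * (z.1 : ℝ≥0∞) ^ r) ^ (1 / r) ≤ C ^ (1 / r) := by
    gcongr
    have : ∀ z : ℕ × ℕ, w z * (z.1 : ℝ≥0∞) ^ r = (w₁ z.1 * (z.1 : ℝ≥0∞) ^ r) * w₂ z.2 := by
      intro z; simp only [hw]; ring
    simp only [this]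
    rw [prodsum (fun k => w₁ k * (k : ℝ≥0∞) ^ r) w₂, h2, mul_one]; exact hC1
  have e4 : (∑' z : ℕ × ℕ, w z * (z.2 : ℝ≥0∞) ^ r) ^ (1 / r) ≤ C ^ (1 / r) := by
    gcongr
    have : ∀ z : ℕ × ℕ, w z * (z.2 : ℝ≥0∞) ^ r = w₁ z.1 * (w₂ z.2 * (z.2 : ℝ≥0∞) ^ r) := by
      intro z; simp only [hw]; ring
    simp only [this]
    rw [prodsum w₁ (fun k => w₂ k * (k : ℝ≥0∞) ^ r), h1, one_mul]; exact hC2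
  have main : (∑' z : ℕ × ℕ, w z * (((t + K * (if z = 0 then 0 else 1)) + z.1) + z.2) ^ r) ^ (1 / r)
      ≤ t + K * (1 - δ * δ) ^ (1 / r) + C ^ (1 / r) + C ^ (1 / r) := by
    refine (weighted_minkowski w (fun z => (t + K * (if z = 0 then 0 else 1)) + z.1)
      (fun z => (z.2 : ℝ≥0∞)) r hr).trans (add_le_add ?_ e4)
    refine (weighted_minkowski w (fun z => t + K * (if z = 0 then 0 else 1))
      (fun z => (z.1 : ℝ≥0∞)) r hr).trans (add_le_add ?_ e3)
    refine (weighted_minkowski w (fun z => t)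
      (fun z => K * (if z = 0 then 0 else 1)) r hr).trans (add_le_add e1.le e2)
  rw [one_div, ENNReal.rpow_inv_le_iff hr0] at main
  simpa only [one_div] using main

lemma subharm_bound (p : ℕ → ℝ≥0∞) (h0 : p 0 = 0) (hp : ∑' y, p y = 1) (r : ℝ) (hr : 1 ≤ r)
    (hC : ∑' y, p y * (y : ℝ≥0∞) ^ (r + 1) ≠ ⊤)
    (hgcd : ∀ q : ℕ, (∀ y, p y ≠ 0 → q ∣ y) → q = 1) :
    ∃ K : ℝ≥0∞, K ≠ ⊤ ∧ ∀ (g : ℕ → ℕ → ℝ≥0∞) (c B : ℝ≥0∞), B ≠ ⊤ →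
      (∀ a b, g a b ≤ B) → (∀ a, 1 ≤ a → g a a ≤ c * (a : ℝ≥0∞) ^ r) →
      (∀ a b, g a b ≤ ∑' y, p y * g (a + y) b) → (∀ a b, g a b ≤ ∑' y, p y * g a (b + y)) →
      ∀ a b, g a b ≤ c * (((max a b : ℕ) : ℝ≥0∞) + K) ^ r := by
  have hr0 : 0 < r := by linarith
  obtain ⟨n1, hn1, δ, hδ, hlow⟩ := bet_lower p h0 hp r hr hC hgcd
  have hmom := bet_moment p h0 hp r hr
  obtain ⟨C, hC'⟩ : ∃ C, C = ∑' y, p y * (y : ℝ≥0∞) ^ (r + 1) := ⟨_, rfl⟩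
  rw [← hC'] at hC hmom
  obtain ⟨ρ, hρ⟩ : ∃ ρ, ρ = 1 - δ * δ := ⟨_, rfl⟩
  have hρ1 : ρ < 1 := by
    rw [hρ]
    exact ENNReal.sub_lt_self ENNReal.one_ne_top one_ne_zero (mul_ne_zero hδ hδ)
  obtain ⟨σ, hσ⟩ : ∃ σ, σ = ρ ^ (1 / r) := ⟨_, rfl⟩
  have hσ1 : σ < 1 := by rw [hσ]; exact ENNReal.rpow_lt_one hρ1 (by positivity)
  obtain ⟨A, hA⟩ : ∃ A : ℝ≥0∞, A = n1 + C ^ (1 / r) + C ^ (1 / r) := ⟨_, rfl⟩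
  have hAt : A ≠ ⊤ := by
    have : C ^ (1 / r) ≠ ⊤ := ENNReal.rpow_ne_top_of_nonneg (by positivity) hC
    rw [hA]
    exact ENNReal.add_ne_top.2 ⟨ENNReal.add_ne_top.2 ⟨by simp, this⟩, this⟩
  have hsub0 : 1 - σ ≠ 0 := (tsub_pos_of_lt hσ1).ne'
  have hsubt : 1 - σ ≠ ⊤ := ENNReal.sub_ne_top ENNReal.one_ne_top
  obtain ⟨K, hK⟩ : ∃ K, K = A / (1 - σ) := ⟨_, rfl⟩
  have hKt : K ≠ ⊤ := by rw [hK]; exact ENNReal.div_ne_top hAt hsub0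
  have hKeq : A + K * σ = K := by
    have h1 : K * (1 - σ) = A := by rw [hK, ENNReal.div_mul_cancel hsub0 hsubt]
    rw [← h1, ← mul_add, tsub_add_cancel_of_le hσ1.le, mul_one]
  refine ⟨K, hKt, fun g c B hB hgB hgd hg1 hg2 => ?_⟩
  have claim : ∀ n : ℕ, ∀ a b, g a b ≤ c * (((max a b : ℕ) : ℝ≥0∞) + K) ^ r + B * ρ ^ n := by
    intro n
    induction n with
    | zero => intro a b; refine (hgB a b).trans ?_; simp
    | succ n ih =>
      intro a b
      obtain ⟨s, hs⟩ : ∃ s, s = max a b := ⟨_, rfl⟩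
      obtain ⟨d, hd⟩ : ∃ d, a + d = s + n1 := ⟨s + n1 - a, by omega⟩
      obtain ⟨e, he⟩ : ∃ e, b + e = s + n1 := ⟨s + n1 - b, by omega⟩
      obtain ⟨hfail, hmink⟩ := minkowski_step (bet p d) (bet p e) r hr C δ
        (bet_sum p h0 hp d) (bet_sum p h0 hp e) (hmom d) (hmom e)
        (hlow d (by omega)) (hlow e (by omega)) ((s + n1 : ℕ) : ℝ≥0∞) K
      rw [← hs]
      calc g a b ≤ ∑' k, bet p d k * g (s + n1 + k) b := by
            rw [← hd]; exact bet_subharm p h0 (fun a => g a b) (fun a => hg1 a b) a d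
        _ ≤ ∑' k, bet p d k * ∑' l, bet p e l * g (s + n1 + k) (s + n1 + l) := by
            refine ENNReal.tsum_le_tsum fun k => mul_le_mul_right ?_ _
            have := bet_subharm p h0 (fun b => g (s + n1 + k) b) (fun b => hg2 _ b) b e
            rw [he] at this
            exact this
        _ = ∑' z : ℕ × ℕ, bet p d z.1 * bet p e z.2 * g (s + n1 + z.1) (s + n1 + z.2) := by
            rw [ENNReal.tsum_prod
              (f := fun k l => bet p d k * bet p e l * g (s + n1 + k) (s + n1 + l))]
            simp only [mul_assoc, ENNReal.tsum_mul_left]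
        _ ≤ ∑' z : ℕ × ℕ, (c * (bet p d z.1 * bet p e z.2 *
              ((((s + n1 : ℕ) : ℝ≥0∞) + K * (if z = 0 then 0 else 1) + z.1) + z.2) ^ r)
              + B * ρ ^ n * (bet p d z.1 * bet p e z.2 * (if z = 0 then 0 else 1))) := by
            refine ENNReal.tsum_le_tsum fun z => ?_
            have : g (s + n1 + z.1) (s + n1 + z.2) ≤
                c * ((((s + n1 : ℕ) : ℝ≥0∞) + K * (if z = 0 then 0 else 1) + z.1) + z.2) ^ r
                 + B * ρ ^ n * (if z = 0 then 0 else 1) := by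
              by_cases hz : z = 0
              · subst hz
                simpa using hgd (s + n1) (by omega)
              · simp only [hz, if_false, mul_one]
                refine (ih _ _).trans ?_
                gcongr c * ?_ ^ r + _
                calc ((max (s + n1 + z.1) (s + n1 + z.2) : ℕ) : ℝ≥0∞) + K
                    ≤ ((s + n1 + z.1 + z.2 : ℕ) : ℝ≥0∞) + K := by
                      gcongr; omega
                  _ = _ := by push_cast; ring
            refine (mul_le_mul_right this _).trans (le_of_eq ?_)
            ring
        _ ≤ c * ((s + n1 : ℕ) + K * σ + C ^ (1 / r) + C ^ (1 / r)) ^ r + B * ρ ^ n * ρ := by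
            rw [ENNReal.tsum_add, ENNReal.tsum_mul_left, ENNReal.tsum_mul_left, hσ, hρ]
            gcongr
        _ = _ := by
            rw [pow_succ, mul_assoc B]
            congr 3
            conv_rhs => rw [← hKeq, hA]
            push_cast; ring
  intro a b
  have hlim : Filter.Tendsto (fun n : ℕ => c * (((max a b : ℕ) : ℝ≥0∞) + K) ^ r + B * ρ ^ n)
      Filter.atTop (nhds (c * (((max a b : ℕ) : ℝ≥0∞) + K) ^ r + B * 0)) :=
    tendsto_const_nhds.add
      (ENNReal.Tendsto.const_mul (ENNReal.tendsto_pow_atTop_nhds_zero_of_lt_one hρ1) (Or.inr hB))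
  simpa using ge_of_tendsto' hlim (fun n => claim n a b)

/-- `r`-th power of the first common point, with value `⊤` when there is none. -/
def Phi (r : ℝ) (a b : ℕ) (w : ℕ ⊕ ℕ → ℕ) : ℝ≥0∞ :=
  ⨅ m : ℕ, ⨅ n : ℕ, if 1 ≤ a + ∑ k ∈ Finset.range m, w (Sum.inl k) ∧
      a + ∑ k ∈ Finset.range m, w (Sum.inl k) = b + ∑ k ∈ Finset.range n, w (Sum.inr k)
    then ((a + ∑ k ∈ Finset.range m, w (Sum.inl k) : ℕ) : ℝ≥0∞) ^ r else ⊤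

lemma Phi_measurable (r : ℝ) (a b : ℕ) : Measurable (Phi r a b) := by
  unfold Phi
  refine Measurable.iInf fun m => Measurable.iInf fun n => ?_
  have h1 : Measurable fun w : ℕ ⊕ ℕ → ℕ => a + ∑ k ∈ Finset.range m, w (Sum.inl k) := by fun_prop
  have h2 : Measurable fun w : ℕ ⊕ ℕ → ℕ => b + ∑ k ∈ Finset.range n, w (Sum.inr k) := by fun_prop
  refine Measurable.ite ?_ ?_ measurable_const
  · exact (measurableSet_le measurable_const h1).inter (measurableSet_eq_fun h1 h2)
  · exact (measurable_of_countable (fun n : ℕ => (n : ℝ≥0∞) ^ r)).comp h1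

lemma Phi_inl (r : ℝ) (a b : ℕ) (w : ℕ ⊕ ℕ → ℕ) :
    Phi r a b w ≤ Phi r (a + w (Sum.inl 0)) b (w ∘ Sum.map Nat.succ id) := by
  unfold Phi
  refine le_iInf fun m => le_iInf fun n => ?_
  refine (iInf_le _ (m + 1)).trans ((iInf_le _ n).trans (le_of_eq ?_))
  have : a + ∑ k ∈ Finset.range (m + 1), w (Sum.inl k) = a + w (Sum.inl 0) +
      ∑ k ∈ Finset.range m, (w ∘ Sum.map Nat.succ id) (Sum.inl k) := by
    rw [Finset.sum_range_succ']; simp; ring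
  rw [this]
  simp

lemma Phi_inr (r : ℝ) (a b : ℕ) (w : ℕ ⊕ ℕ → ℕ) :
    Phi r a b w ≤ Phi r a (b + w (Sum.inr 0)) (w ∘ Sum.map id Nat.succ) := by
  unfold Phi
  refine le_iInf fun m => le_iInf fun n => ?_
  refine (iInf_le _ m).trans ((iInf_le _ (n + 1)).trans (le_of_eq ?_))
  have : b + ∑ k ∈ Finset.range (n + 1), w (Sum.inr k) = b + w (Sum.inr 0) +
      ∑ k ∈ Finset.range n, (w ∘ Sum.map id Nat.succ) (Sum.inr k) := by
    rw [Finset.sum_range_succ']; simp; ring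
  rw [this]
  simp

lemma Phi_diag (r : ℝ) (a : ℕ) (ha : 1 ≤ a) (w : ℕ ⊕ ℕ → ℕ) :
    Phi r a a w ≤ (a : ℝ≥0∞) ^ r := by
  unfold Phi
  refine (iInf_le _ 0).trans ((iInf_le _ 0).trans ?_)
  simp [ha]

lemma first_le_Phi {Ω : Type*} (W : ℕ ⊕ ℕ → Ω → ℕ) (r : ℝ) (hr : 1 ≤ r) (a b : ℕ) (ω : Ω) :
    ENNReal.ofReal ((firstCommonPoint (fun k => W (Sum.inl k)) (fun k => W (Sum.inr k))
      a b ω : ℝ) ^ r) ≤ Phi r a b (fun k => W k ω) := by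
  have hr0 : 0 ≤ r := by linarith
  rw [← ENNReal.ofReal_rpow_of_nonneg (by positivity) hr0, ENNReal.ofReal_natCast]
  unfold Phi
  refine le_iInf fun m => le_iInf fun n => ?_
  split_ifs with hc
  · gcongr
    exact Nat.sInf_le ⟨hc.1, ⟨m, rfl⟩, ⟨n, hc.2.symm⟩⟩
  · exact le_top

lemma shift_bound {Ω : Type*} [MeasurableSpace Ω] (μ : Measure Ω) [IsProbabilityMeasure μ]
    (W : ℕ ⊕ ℕ → Ω → ℕ)
    (hmeas : ∀ k, Measurable (W k))
    (hindep : iIndepFun W μ)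
    (hident : ∀ k, IdentDistrib (W k) (W (Sum.inl 0)) μ μ)
    (h : ℕ) (hh : 0 < h)
    (hdvd : ∀ᵐ ω ∂μ, h ∣ W (Sum.inl 0) ω)
    (i0 : ℕ ⊕ ℕ) (σ : ℕ ⊕ ℕ → ℕ ⊕ ℕ) (hσ : Function.Injective σ) (hi0 : ∀ k, σ k ≠ i0)
    (F : ℕ → (ℕ ⊕ ℕ → ℕ) → ℝ≥0∞) (hF : ∀ y, Measurable (F y)) (G : (ℕ ⊕ ℕ → ℕ) → ℝ≥0∞)
    (hG : ∀ w y, w i0 = h * y → G w ≤ F y (w ∘ σ)) :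
    ∫⁻ ω, G (fun k => W k ω) ∂μ ≤
      ∑' y, μ {ω | W (Sum.inl 0) ω = h * y} * ∫⁻ ω, F y (fun k => W k ω) ∂μ := by
  have hWm : Measurable (fun ω k => W k ω) := measurable_pi_iff.2 hmeas
  have hWσm : Measurable (fun ω k => W (σ k) ω) := measurable_pi_iff.2 fun k => hmeas _
  -- law of the shifted family
  have hlaw : μ.map (fun ω k => W (σ k) ω) = μ.map (fun ω k => W k ω) := by
    rw [iIndepFun.map_fun_eq_infinitePi_map hmeas hindep,
      iIndepFun.map_fun_eq_infinitePi_map (fun k => hmeas (σ k)) (hindep.precomp hσ)]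
    congr 1; ext1 k
    rw [(hident (σ k)).map_eq, (hident k).map_eq]
  have hind : IndepFun (W i0) (fun ω k => W (σ k) ω) μ := by
    have h1 : iIndep (fun i => MeasurableSpace.comap (W i) inferInstance) μ := hindep
    have h2 := indep_iSup_of_disjoint (fun i => (hmeas i).comap_le) h1
      (S := {i0}) (T := Set.range σ)
      (by rw [Set.disjoint_singleton_left]; rintro ⟨k, hk⟩; exact hi0 k hk)
    rw [IndepFun_iff_Indep]
    refine indep_of_indep_of_le_left (indep_of_indep_of_le_right h2 ?_) ?_
    · rw [MeasurableSpace.pi, MeasurableSpace.comap_iSup]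
      refine iSup_le fun k => ?_
      rw [MeasurableSpace.comap_comp]
      exact le_iSup₂_of_le (f := fun i (_ : i ∈ Set.range σ) =>
        MeasurableSpace.comap (W i) inferInstance) (σ k) ⟨k, rfl⟩ le_rfl
    · exact le_iSup₂_of_le (f := fun i (_ : i ∈ ({i0} : Set (ℕ ⊕ ℕ))) =>
        MeasurableSpace.comap (W i) inferInstance) i0 rfl le_rfl
  have hdvd0 : ∀ᵐ ω ∂μ, h ∣ W i0 ω :=
    (hident i0).symm.ae_snd (p := fun n => h ∣ n) (MeasurableSet.of_discrete) hdvd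
  let χ : ℕ → ℕ → ℝ≥0∞ := fun y n => if n = h * y then 1 else 0
  have hχ : ∀ y, Measurable (χ y) := fun y => measurable_of_countable _
  calc ∫⁻ ω, G (fun k => W k ω) ∂μ
      ≤ ∫⁻ ω, ∑' y, χ y (W i0 ω) * F y (fun k => W (σ k) ω) ∂μ := by
        refine lintegral_mono_ae ?_
        filter_upwards [hdvd0] with ω hω
        obtain ⟨y, hy⟩ := hω
        refine (hG _ y hy).trans (le_trans ?_ (ENNReal.le_tsum y))
        simp [χ, hy, Function.comp_def]
    _ = ∑' y, ∫⁻ ω, χ y (W i0 ω) * F y (fun k => W (σ k) ω) ∂μ := by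
        refine lintegral_tsum fun y => ?_
        exact (((hχ y).comp (hmeas i0)).mul ((hF y).comp hWσm)).aemeasurable
    _ = ∑' y, μ {ω | W (Sum.inl 0) ω = h * y} * ∫⁻ ω, F y (fun k => W k ω) ∂μ := by
        congr 1; ext1 y
        have h3 := lintegral_mul_eq_lintegral_mul_lintegral_of_indepFun
          ((hχ y).comp (hmeas i0)) ((hF y).comp hWσm)
          (hind.comp (hχ y) (hF y))
        simp only [Pi.mul_apply, Function.comp_apply] at h3
        rw [h3]
        congr 1
        · have h4 : μ {ω | W (Sum.inl 0) ω = h * y} = μ {ω | W i0 ω = h * y} :=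
            ((hident i0).measure_mem_eq (s := {h * y}) (MeasurableSet.of_discrete)).symm
          rw [h4, ← lintegral_indicator_one (measurableSet_eq_fun (hmeas i0) measurable_const)]
          congr 1; ext1 ω
          simp [χ, Set.indicator]
        · have h5 := lintegral_map (μ := μ) (hF y) hWσm
          rw [hlaw, lintegral_map (hF y) hWm] at h5
          exact h5.symm

/-- **Lemma A.3** (a renewal-process bound).  Let `{Y_i}` be i.i.d. positive integer-valued
random variables and `{Ỹ_j}` an independent copy; let `h` be the largest positive integer such
that the common distribution is supported on `hℕ*`.  Let `1 ≤ r < ∞` and assume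
`E(Y^{r+1}) < ∞`.  Then there is a finite constant `C` such that for all `i, j ∈ hℕ`,
`E(L_{i,j}^r) ≤ C (1 + i^r + j^r)`. -/
theorem renewal_first_common_point_moment
    {Ω : Type*} [MeasurableSpace Ω] (μ : Measure Ω) [IsProbabilityMeasure μ]
    (W : ℕ ⊕ ℕ → Ω → ℕ)
    (hmeas : ∀ k, Measurable (W k))
    (hindep : iIndepFun W μ)
    (hident : ∀ k, IdentDistrib (W k) (W (Sum.inl 0)) μ μ)
    (hpos : ∀ k ω, 0 < W k ω)
    (h : ℕ) (hh : 0 < h)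
    (hdvd : ∀ᵐ ω ∂μ, h ∣ W (Sum.inl 0) ω)
    (hmax : ∀ h' : ℕ, 0 < h' → (∀ᵐ ω ∂μ, h' ∣ W (Sum.inl 0) ω) → h' ≤ h)
    (r : ℝ) (hr : 1 ≤ r)
    (hmom : (∫⁻ ω, ((W (Sum.inl 0) ω : ℝ≥0∞)) ^ (r + 1) ∂μ) < ⊤) :
    ∃ C : ℝ, ∀ a b : ℕ,
      (∫⁻ ω, ENNReal.ofReal
          ((firstCommonPoint (fun k => W (Sum.inl k)) (fun k => W (Sum.inr k))
              (h * a) (h * b) ω : ℝ) ^ r) ∂μ) ≤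
        ENNReal.ofReal (C * (1 + ((h * a : ℕ) : ℝ) ^ r + ((h * b : ℕ) : ℝ) ^ r)) := by
  have hr0 : 0 < r := by linarith
  have hWm : Measurable (fun ω k => W k ω) := measurable_pi_iff.2 hmeas
  have hinj : Function.Injective (fun y : ℕ => h * y) := fun x y hxy =>
    Nat.eq_of_mul_eq_mul_left hh hxy
  have sh := fun i0 σ hσ hi0 F hF G hG =>
    shift_bound μ W hmeas hindep hident h hh hdvd i0 σ hσ hi0 F hF G hG
  have shl := sh (Sum.inl 0) (Sum.map Nat.succ id)
    (Sum.map_injective.2 ⟨Nat.succ_injective, Function.injective_id⟩) (by rintro (k | k) <;> simp)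
  have shr := sh (Sum.inr 0) (Sum.map id Nat.succ)
    (Sum.map_injective.2 ⟨Function.injective_id, Nat.succ_injective⟩) (by rintro (k | k) <;> simp)
  obtain ⟨p, hpdef⟩ : ∃ p : ℕ → ℝ≥0∞, p = fun y => μ {ω | W (Sum.inl 0) ω = h * y} := ⟨_, rfl⟩
  have hpy : ∀ y, μ {ω | W (Sum.inl 0) ω = h * y} = p y := fun y => by rw [hpdef]
  simp only [hpy] at shl shr
  have hcomp : ∀ f : ℕ → ℝ≥0∞, ∑' y, p y * f (h * y) ≤ ∫⁻ ω, f (W (Sum.inl 0) ω) ∂μ := by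
    intro f
    rw [← lintegral_map (μ := μ) (measurable_of_countable f) (hmeas _), lintegral_countable']
    refine le_trans (le_of_eq ?_) (ENNReal.tsum_comp_le_tsum_of_injective hinj _)
    congr 1; ext1 y
    rw [Measure.map_apply (hmeas _) MeasurableSet.of_discrete, mul_comm, ← hpy]
    rfl
  have h0 : p 0 = 0 := by
    rw [← hpy]
    have : {ω | W (Sum.inl 0) ω = h * 0} = ∅ := by
      ext ω; have := hpos (Sum.inl 0) ω; simp; omega
    rw [this, measure_empty]
  have hp : ∑' y, p y = 1 := by
    refine le_antisymm ?_ ?_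
    · simpa using hcomp (fun _ => 1)
    · simpa using shl (fun _ _ => 1) (fun _ => measurable_const) (fun _ => 1) (fun _ _ _ => le_rfl)
  have hC : ∑' y, p y * (y : ℝ≥0∞) ^ (r + 1) ≠ ⊤ := by
    refine ne_top_of_le_ne_top hmom.ne (le_trans ?_ (hcomp (fun n => (n : ℝ≥0∞) ^ (r + 1))))
    refine ENNReal.tsum_le_tsum fun y => mul_le_mul_right ?_ _
    have : (y : ℝ≥0∞) ≤ ((h * y : ℕ) : ℝ≥0∞) := by
      exact_mod_cast Nat.le_mul_of_pos_left y hh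
    exact ENNReal.rpow_le_rpow this (by linarith)
  have hgcd : ∀ q : ℕ, (∀ y, p y ≠ 0 → q ∣ y) → q = 1 := by
    intro q hq
    have hq0 : q ≠ 0 := by
      rintro rfl
      have : ∀ y, p y = 0 := by
        intro y
        by_contra hy
        have := hq y hy
        rw [zero_dvd_iff] at this
        subst this
        exact hy h0
      simp [this] at hp
    have hae : ∀ᵐ ω ∂μ, ∀ y, p y = 0 → W (Sum.inl 0) ω ≠ h * y := by
      rw [ae_all_iff]
      intro y
      by_cases hy : p y = 0
      · rw [← hpy] at hy
        have : ∀ᵐ ω ∂μ, W (Sum.inl 0) ω ≠ h * y := by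
          rw [ae_iff]; simpa using hy
        filter_upwards [this] with ω hω _ using hω
      · simp [hy]
    have := hmax (h * q) (by positivity) (by
      filter_upwards [hdvd, hae] with ω h1 h2
      obtain ⟨y, hy⟩ := h1
      rw [hy]
      exact mul_dvd_mul_left h (hq y fun h3 => h2 y h3 hy))
    have : q ≤ 1 := by
      by_contra hcon
      nlinarith
    omega
  obtain ⟨K, hKt, hK⟩ := subharm_bound p h0 hp r hr hC hgcd
  have hbound : ∀ N : ℕ, ∀ a b : ℕ,
      ∫⁻ ω, min (Phi r (h * a) (h * b) (fun k => W k ω)) N ∂μ ≤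
        (h : ℝ≥0∞) ^ r * (((max a b : ℕ) : ℝ≥0∞) + K) ^ r := by
    intro N
    have hmeasF : ∀ a b, Measurable fun w => min (Phi r a b w) (N : ℝ≥0∞) := fun a b =>
      (Phi_measurable r a b).min measurable_const
    refine hK (fun a b => ∫⁻ ω, min (Phi r (h * a) (h * b) (fun k => W k ω)) N ∂μ)
      _ N (by simp) ?_ ?_ ?_ ?_
    · intro a b
      calc _ ≤ ∫⁻ ω, (N : ℝ≥0∞) ∂μ := lintegral_mono fun ω => min_le_right _ _
        _ = N := by simp
    · intro a ha
      calc _ ≤ ∫⁻ ω, ((h * a : ℕ) : ℝ≥0∞) ^ r ∂μ :=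
            lintegral_mono fun ω => (min_le_left _ _).trans
              (Phi_diag r _ (Nat.mul_pos hh ha) _)
        _ = _ := by
            simp only [lintegral_const, measure_univ, mul_one]
            push_cast
            rw [ENNReal.mul_rpow_of_nonneg _ _ hr0.le]
    · intro a b
      refine shl (fun y w => min (Phi r (h * (a + y)) (h * b) w) N) (fun y => hmeasF _ _)
        (fun w => min (Phi r (h * a) (h * b) w) N) ?_
      intro w y hy
      refine min_le_min ?_ le_rfl
      rw [mul_add, ← hy]
      exact Phi_inl r _ _ w
    · intro a b
      refine shr (fun y w => min (Phi r (h * a) (h * (b + y)) w) N) (fun y => hmeasF _ _)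
        (fun w => min (Phi r (h * a) (h * b) w) N) ?_
      intro w y hy
      refine min_le_min ?_ le_rfl
      rw [mul_add, ← hy]
      exact Phi_inr r _ _ w
  have hPhi : ∀ a b : ℕ, ∫⁻ ω, Phi r (h * a) (h * b) (fun k => W k ω) ∂μ ≤
        (h : ℝ≥0∞) ^ r * (((max a b : ℕ) : ℝ≥0∞) + K) ^ r := by
    intro a b
    have hsup : ∀ x : ℝ≥0∞, x = ⨆ N : ℕ, min x (N : ℝ≥0∞) := by
      intro x
      have : (⨆ N : ℕ, min x (N : ℝ≥0∞)) = x ⊓ ⨆ N : ℕ, (N : ℝ≥0∞) := (inf_iSup_eq x _).symm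
      rw [this, ENNReal.iSup_natCast, inf_top_eq]
    calc _ = ∫⁻ ω, ⨆ N : ℕ, min (Phi r (h * a) (h * b) (fun k => W k ω)) (N : ℝ≥0∞) ∂μ := by
          congr 1; ext1 ω; exact hsup _
      _ = ⨆ N : ℕ, ∫⁻ ω, min (Phi r (h * a) (h * b) (fun k => W k ω)) (N : ℝ≥0∞) ∂μ := by
          refine lintegral_iSup (fun N => ?_) ?_
          · exact ((Phi_measurable r _ _).comp hWm).min measurable_const
          · intro M N hMN ω
            exact min_le_min le_rfl (by exact_mod_cast hMN)
      _ ≤ _ := iSup_le fun N => hbound N a b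
  obtain ⟨k, rfl⟩ : ∃ k : NNReal, K = k := ⟨K.toNNReal, (ENNReal.coe_toNNReal hKt).symm⟩
  refine ⟨2 ^ r * (1 + (h * (k : ℝ)) ^ r), fun a b => ?_⟩
  refine (lintegral_mono fun ω => first_le_Phi W r hr _ _ ω).trans ((hPhi a b).trans ?_)
  have hconv : (h : ℝ≥0∞) ^ r * (((max a b : ℕ) : ℝ≥0∞) + (k : ℝ≥0∞)) ^ r =
      ENNReal.ofReal (((h : ℝ) * (((max a b : ℕ) : ℝ) + k)) ^ r) := by
    rw [← ENNReal.mul_rpow_of_nonneg _ _ hr0.le, ← ENNReal.ofReal_rpow_of_nonneg (by positivity)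
      hr0.le, ENNReal.ofReal_mul (by positivity), ENNReal.ofReal_add (by positivity) (by positivity),
      ENNReal.ofReal_natCast, ENNReal.ofReal_natCast, ENNReal.ofReal_coe_nnreal]
  rw [hconv]
  refine ENNReal.ofReal_le_ofReal ?_
  have hA : 0 ≤ ((h * a : ℕ) : ℝ) ^ r := by positivity
  have hB : 0 ≤ ((h * b : ℕ) : ℝ) ^ r := by positivity
  have hKK : 0 ≤ ((h : ℝ) * k) ^ r := by positivity
  have h2 : (0 : ℝ) < 2 ^ r := by positivity
  have hmaxle : ((h * max a b : ℕ) : ℝ) ^ r ≤ ((h * a : ℕ) : ℝ) ^ r + ((h * b : ℕ) : ℝ) ^ r := by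
    rcases le_total a b with hab | hab
    · rw [max_eq_right hab]; linarith
    · rw [max_eq_left hab]; linarith
  -- crude bound `(x + y)^r ≤ 2^r (x^r + y^r)`
  have crude : ∀ x y : ℝ, 0 ≤ x → 0 ≤ y → (x + y) ^ r ≤ 2 ^ r * (x ^ r + y ^ r) := by
    intro x y hx hy
    have hxr : 0 ≤ x ^ r := by positivity
    have hyr : 0 ≤ y ^ r := by positivity
    calc (x + y) ^ r ≤ (2 * max x y) ^ r := by
          refine Real.rpow_le_rpow (by positivity) ?_ hr0.le
          linarith [le_max_left x y, le_max_right x y]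
      _ = 2 ^ r * (max x y) ^ r := Real.mul_rpow (by norm_num) (le_max_of_le_left hx)
      _ ≤ _ := by
          refine mul_le_mul_of_nonneg_left ?_ h2.le
          rcases le_total x y with hab | hab
          · rw [max_eq_right hab]; linarith
          · rw [max_eq_left hab]; linarith
  calc ((h : ℝ) * (((max a b : ℕ) : ℝ) + k)) ^ r = (((h * max a b : ℕ) : ℝ) + h * k) ^ r := by
        push_cast; ring_nf
    _ ≤ 2 ^ r * (((h * max a b : ℕ) : ℝ) ^ r + (h * (k : ℝ)) ^ r) :=
        crude _ _ (by positivity) (by positivity)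
    _ ≤ 2 ^ r * ((1 + (h * (k : ℝ)) ^ r) *
          (1 + ((h * a : ℕ) : ℝ) ^ r + ((h * b : ℕ) : ℝ) ^ r)) := by
        refine mul_le_mul_of_nonneg_left ?_ h2.le
        nlinarith [mul_nonneg hKK hA, mul_nonneg hKK hB]
    _ = _ := by ring
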